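/- Let E be a finite-dimensional real normed space, let n be a natural number, let χ and ξ be continuous linear functionals on E, and let ν be a finite Borel measure on E carried by the set {y ∈ E : χ(y) = 1 and ξ(y) > 0}. Define ν_ξ as the pushforward, under the map y ↦ ξ(y)^{-1} • y, of the measure with density y ↦ ξ(y)^{-(n+1)} with respect to ν. Let λ_n be the measure on (0,∞) with density t ↦ t^n with respect to Lebesgue measure. Then the pushforward of the product measure λ_n ⊗ ν under the map (t, y) ↦ t • y is equal to the pushforward of the product measure λ_n ⊗ ν_ξ under the same map (t, y) ↦ t • y. -/

import Mathlib

open MeasureTheory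

section SemigroupAction

variable {M E : Type*} [MeasurableSpace M] [Semigroup M] [MeasurableMul M]
  [MeasurableSpace E] [SemigroupAction M E] [MeasurableSMul₂ M E]

/- The factor `a y` that moves `y` to `a y • y` is absorbed by the variable of `μ`, on which right
translation by `a y` only costs the weight `w y`. -/
theorem map_smul_prod_map_smul_withDensity {μ : Measure M} [SFinite μ] {ν : Measure E} [SFinite ν]
    {a : E → M} (ha : Measurable a) {w : E → ENNReal} (hw : Measurable w)
    (h : ∀ᵐ y ∂ν, w y • μ.map (· * a y) = μ) :
    (μ.prod ((ν.withDensity w).map fun y ↦ a y • y)).map (fun p ↦ p.1 • p.2) =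
      (μ.prod ν).map fun p ↦ p.1 • p.2 := by
  refine Measure.ext_of_lintegral _ fun f hf ↦ ?_
  have hsmul : Measurable fun p : M × E ↦ p.1 • p.2 := by fun_prop
  have hmove : Measurable fun y ↦ a y • y := by fun_prop
  have hf_smul : Measurable fun p : M × E ↦ f (p.1 • p.2) := hf.comp hsmul
  have hinner : Measurable fun y ↦ ∫⁻ t, f (t • y) ∂μ := hf_smul.lintegral_prod_left'
  have htranslate (y : E) (hy : w y • μ.map (· * a y) = μ) :
      w y * ∫⁻ t, f (t • a y • y) ∂μ = ∫⁻ t, f (t • y) ∂μ := by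
    calc w y * ∫⁻ t, f (t • a y • y) ∂μ
        = ∫⁻ t, f (t • y) ∂(w y • μ.map (· * a y)) := by
          rw [lintegral_smul_measure, lintegral_map (by fun_prop) (by fun_prop), smul_eq_mul]
          simp only [mul_smul]
      _ = ∫⁻ t, f (t • y) ∂μ := by rw [hy]
  calc ∫⁻ x, f x ∂(μ.prod ((ν.withDensity w).map fun y ↦ a y • y)).map (fun p ↦ p.1 • p.2)
      = ∫⁻ y, ∫⁻ t, f (t • y) ∂μ ∂(ν.withDensity w).map (fun y ↦ a y • y) := by
        rw [lintegral_map hf hsmul, lintegral_prod_symm _ hf_smul.aemeasurable]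
    _ = ∫⁻ y, w y * ∫⁻ t, f (t • a y • y) ∂μ ∂ν := by
        rw [lintegral_map hinner hmove]
        exact lintegral_withDensity_eq_lintegral_mul _ hw (hinner.comp hmove)
    _ = ∫⁻ y, ∫⁻ t, f (t • y) ∂μ ∂ν := lintegral_congr_ae (h.mono htranslate)
    _ = ∫⁻ x, f x ∂(μ.prod ν).map fun p ↦ p.1 • p.2 := by
        rw [lintegral_map hf hsmul, lintegral_prod_symm _ hf_smul.aemeasurable]

end SemigroupAction

/-- The measure `t ^ s dt` on `(0, ∞)`, the radial factor of a cone measure, regarded as a measure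
on `ℝ` so that it can be multiplied with a measure on a space on which `ℝ` acts. -/
noncomputable def volumeIoiRPow (s : ℝ) : Measure ℝ :=
  (volume.restrict (Set.Ioi 0)).withDensity fun t ↦ ENNReal.ofReal (t ^ s)

instance (s : ℝ) : SFinite (volumeIoiRPow s) := by
  unfold volumeIoiRPow
  infer_instance

theorem volumeIoiRPow_natCast (n : ℕ) :
    volumeIoiRPow n =
      (volume.restrict (Set.Ioi 0)).withDensity fun t ↦ ENNReal.ofReal (t ^ n) := by
  simp only [volumeIoiRPow, Real.rpow_natCast]

theorem lintegral_volumeIoiRPow (s : ℝ) {f : ℝ → ENNReal} (hf : Measurable f) :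
    ∫⁻ t, f t ∂volumeIoiRPow s = ∫⁻ t in Set.Ioi 0, ENNReal.ofReal (t ^ s) * f t :=
  lintegral_withDensity_eq_lintegral_mul _ (by fun_prop) hf

theorem smul_map_volumeIoiRPow_mul_right (s : ℝ) {c : ℝ} (hc : 0 < c) :
    ENNReal.ofReal (c ^ (s + 1)) • (volumeIoiRPow s).map (· * c) = volumeIoiRPow s := by
  refine Measure.ext_of_lintegral _ fun f hf ↦ ?_
  have himage : (· * c) '' Set.Ioi 0 = Set.Ioi 0 := by
    simp only [mul_comm _ c, Set.image_mul_left_Ioi hc, mul_zero]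
  have hweight (t : ℝ) (ht : 0 < t) : c ^ (s + 1) * t ^ s = c * (t * c) ^ s := by
    rw [Real.rpow_add_one hc.ne', Real.mul_rpow ht.le hc.le]
    ring
  symm
  calc ∫⁻ t, f t ∂volumeIoiRPow s
      = ∫⁻ t in (· * c) '' Set.Ioi 0, ENNReal.ofReal (t ^ s) * f t := by
        rw [himage, lintegral_volumeIoiRPow s hf]
    _ = ∫⁻ t in Set.Ioi 0, ENNReal.ofReal c * (ENNReal.ofReal ((t * c) ^ s) * f (t * c)) := by
        rw [lintegral_image_eq_lintegral_abs_deriv_mul measurableSet_Ioi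
          (fun t _ ↦ (hasDerivAt_mul_const c).hasDerivWithinAt)
          (mul_left_injective₀ hc.ne').injOn, abs_of_pos hc]
    _ = ∫⁻ t in Set.Ioi 0,
          ENNReal.ofReal (c ^ (s + 1)) * (ENNReal.ofReal (t ^ s) * f (t * c)) := by
        refine setLIntegral_congr_fun measurableSet_Ioi fun t ht ↦ ?_
        simp only [← mul_assoc, ← ENNReal.ofReal_mul hc.le,
          ← ENNReal.ofReal_mul (Real.rpow_nonneg hc.le _), hweight t ht]
    _ = ∫⁻ t, f t ∂(ENNReal.ofReal (c ^ (s + 1)) • (volumeIoiRPow s).map (· * c)) := by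
        rw [lintegral_const_mul _ (by fun_prop), lintegral_smul_measure,
          lintegral_map hf (by fun_prop), lintegral_volumeIoiRPow s (by fun_prop), smul_eq_mul]

theorem coneMeasure_eq_of_crossSection_general {E : Type*} [MeasurableSpace E]
    [SemigroupAction ℝ E] [MeasurableSMul₂ ℝ E] (s : ℝ) {ξ : E → ℝ} (hξ : Measurable ξ)
    {ν : Measure E} [SFinite ν] (hpos : ∀ᵐ y ∂ν, 0 < ξ y) :
    ((volumeIoiRPow s).prod ν).map (fun p ↦ p.1 • p.2) =
      ((volumeIoiRPow s).prod ((ν.withDensity fun y ↦ ENNReal.ofReal ((ξ y ^ (s + 1))⁻¹)).map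
        fun y ↦ (ξ y)⁻¹ • y)).map (fun p ↦ p.1 • p.2) := by
  refine (map_smul_prod_map_smul_withDensity hξ.inv (by fun_prop) ?_).symm
  filter_upwards [hpos] with y hy
  rw [← Real.inv_rpow hy.le]
  exact smul_map_volumeIoiRPow_mul_right s (inv_pos.2 hy)

/-- Invariance of the Duistermaat–Heckman measure under change of Reeb cross-section:
if `ν` is carried by `{χ = 1} ∩ {ξ > 0}` and `ν_ξ` is the pushforward under
`y ↦ ξ(y)⁻¹ • y` of `ξ(y)^{-(n+1)} ν`, then the cone measures built from `ν` and `ν_ξ`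
by pushing forward `t^n dt ⊗ (·)` under `(t, y) ↦ t • y` coincide. -/
theorem coneMeasure_eq_of_crossSection
    {E : Type*} [NormedAddCommGroup E] [NormedSpace ℝ E]
    [FiniteDimensional ℝ E] [MeasurableSpace E] [BorelSpace E]
    (n : ℕ) (χ ξ : E →L[ℝ] ℝ)
    (ν : Measure E) [IsFiniteMeasure ν]
    (hcarr : ν {y | ¬ (χ y = 1 ∧ 0 < ξ y)} = 0)
    (lamn : Measure ℝ)
    (hlamn : lamn = (volume.restrict (Set.Ioi (0:ℝ))).withDensity
      (fun t => ENNReal.ofReal (t ^ n)))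
    (νξ : Measure E)
    (hνξ : νξ = Measure.map (fun y => (ξ y)⁻¹ • y)
      (ν.withDensity (fun y => ENNReal.ofReal ((ξ y ^ (n + 1))⁻¹)))) :
    Measure.map (fun p : ℝ × E => p.1 • p.2) (lamn.prod ν) =
      Measure.map (fun p : ℝ × E => p.1 • p.2) (lamn.prod νξ) := by
  have hpos : ∀ᵐ y ∂ν, 0 < ξ y := (ae_iff.2 hcarr).mono fun _ hy ↦ hy.2
  subst hlamn hνξ
  rw [← volumeIoiRPow_natCast]
  exact_mod_cast coneMeasure_eq_of_crossSection_general n ξ.measurable hpos
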